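/- arXiv:2208.02126 — 4 statements merged into one kernel-verified Lean document; each statement's English description precedes it below -/
import Mathlib

section
/- Let (Ω, P) be a probability space, let X be a random feature vector, Y a {0,1}-valued random label, and let ε be a {0,1}-valued random variable independent of the pair (X, Y) with P(ε = 1) = γ for some γ ∈ [0,1]. Define the noisy label Ỹ = εY + (1−ε)(1−Y). Then for any measurable loss ℓ : ℝ → ℝ and any measurable scorer f such that ℓ(f(X)(2Y−1)) and ℓ(−f(X)(2Y−1)) are integrable, the noisy pointwise risk decomposes as E[ℓ(f(X)(2Ỹ−1))] = γ·E[ℓ(f(X)(2Y−1))] + (1−γ)·E[ℓ(−f(X)(2Y−1))]. -/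
open MeasureTheory ProbabilityTheory

/-!
In terms of signs, `2Ỹ - 1 = (2ε - 1)(2Y - 1)`: the noise keeps the margin `f(X)(2Y - 1)` when
`ε = 1` and negates it when `ε = 0`. Hence the noisy loss is the combination, with weights `ε` and
`1 - ε`, of the losses at the two margins, and independence lets the expectation factor through
each product.
-/

/-- The corrupted label `Ỹ = ey + (1 - e)(1 - y)`: the label `y` is kept when `e = 1` and flipped
when `e = 0`. Labels and noise are real numbers so that expectations apply to them directly. -/
def noisyLabel (e y : ℝ) : ℝ := e * y + (1 - e) * (1 - y)

lemma two_mul_noisyLabel_sub_one (e y : ℝ) :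
    2 * noisyLabel e y - 1 = (2 * e - 1) * (2 * y - 1) := by
  unfold noisyLabel
  ring

lemma apply_mul_noisyLabel_eq_smul_add_smul {E : Type*} [AddCommGroup E] [Module ℝ E]
    (ℓ : ℝ → E) (t y : ℝ) {e : ℝ} (he : e = 0 ∨ e = 1) :
    ℓ (t * (2 * noisyLabel e y - 1))
      = e • ℓ (t * (2 * y - 1)) + (1 - e) • ℓ (-(t * (2 * y - 1))) := by
  rw [two_mul_noisyLabel_sub_one, mul_left_comm]
  obtain rfl | rfl := he
  · simp only [mul_zero, zero_sub, neg_one_mul, zero_smul, sub_zero, one_smul, zero_add]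
  · norm_num only [one_mul, one_smul, zero_smul, add_zero]

section Expectation

variable {Ω : Type*} [MeasurableSpace Ω] {P : Measure Ω}

lemma integrable_of_ae_eq_zero_or_one [IsFiniteMeasure P] {e : Ω → ℝ} (he : AEMeasurable e P)
    (heval : ∀ᵐ ω ∂P, e ω = 0 ∨ e ω = 1) : Integrable e P := by
  refine .of_mem_Icc 0 1 he ?_
  filter_upwards [heval] with ω hω
  rcases hω with h | h <;> simp [h]

variable [IsProbabilityMeasure P]
  {E : Type*} [NormedAddCommGroup E] [NormedSpace ℝ E] [MeasurableSpace E] [BorelSpace E]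

lemma integral_smul_add_one_sub_smul_of_indepFun {e : Ω → ℝ} {U V : Ω → E}
    (heU : IndepFun e U P) (heV : IndepFun e V P)
    (he : Integrable e P) (hU : Integrable U P) (hV : Integrable V P) :
    ∫ ω, e ω • U ω + (1 - e ω) • V ω ∂P
      = (∫ ω, e ω ∂P) • ∫ ω, U ω ∂P + (1 - ∫ ω, e ω ∂P) • ∫ ω, V ω ∂P := by
  have he' : Integrable (fun ω ↦ 1 - e ω) P := (integrable_const 1).sub he
  have heV' : IndepFun (fun ω ↦ 1 - e ω) V P :=
    heV.comp (measurable_id.const_sub 1) measurable_id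
  have integral_one_sub : ∫ ω, (1 - e ω) ∂P = 1 - ∫ ω, e ω ∂P := by
    rw [integral_sub (integrable_const 1) he, integral_const, probReal_univ, one_smul]
  rw [integral_add (heU.integrable_smul he hU) (heV'.integrable_smul he' hV),
    heU.integral_fun_smul_eq_smul_integral he.1 hU.1,
    heV'.integral_fun_smul_eq_smul_integral he'.1 hV.1, integral_one_sub]

theorem noisy_pointwise_risk_decomposition_general
    {𝒳 : Type*} [MeasurableSpace 𝒳] {X : Ω → 𝒳} {Y e : Ω → ℝ}
    (he : AEMeasurable e P) (heval : ∀ᵐ ω ∂P, e ω = 0 ∨ e ω = 1)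
    (hindep : IndepFun (fun ω ↦ (X ω, Y ω)) e P)
    {ℓ : ℝ → E} {f : 𝒳 → ℝ} (hℓ : Measurable ℓ) (hf : Measurable f)
    (hint : Integrable (fun ω ↦ ℓ (f (X ω) * (2 * Y ω - 1))) P)
    (hint' : Integrable (fun ω ↦ ℓ (-(f (X ω) * (2 * Y ω - 1)))) P) :
    ∫ ω, ℓ (f (X ω) * (2 * noisyLabel (e ω) (Y ω) - 1)) ∂P
      = P.real {ω | e ω = 1} • ∫ ω, ℓ (f (X ω) * (2 * Y ω - 1)) ∂P
        + (1 - P.real {ω | e ω = 1}) • ∫ ω, ℓ (-(f (X ω) * (2 * Y ω - 1))) ∂P := by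
  have hclean : IndepFun e (fun ω ↦ ℓ (f (X ω) * (2 * Y ω - 1))) P :=
    hindep.symm.comp (ψ := fun p : 𝒳 × ℝ ↦ ℓ (f p.1 * (2 * p.2 - 1))) measurable_id (by fun_prop)
  have hflipped : IndepFun e (fun ω ↦ ℓ (-(f (X ω) * (2 * Y ω - 1)))) P :=
    hindep.symm.comp (ψ := fun p : 𝒳 × ℝ ↦ ℓ (-(f p.1 * (2 * p.2 - 1)))) measurable_id
      (by fun_prop)
  have hsplit : ∀ᵐ ω ∂P, ℓ (f (X ω) * (2 * noisyLabel (e ω) (Y ω) - 1))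
      = e ω • ℓ (f (X ω) * (2 * Y ω - 1)) + (1 - e ω) • ℓ (-(f (X ω) * (2 * Y ω - 1))) :=
    heval.mono fun ω ↦ apply_mul_noisyLabel_eq_smul_add_smul ℓ (f (X ω)) (Y ω)
  have he_int : Integrable e P := integrable_of_ae_eq_zero_or_one he heval
  rw [integral_congr_ae hsplit,
    integral_smul_add_one_sub_smul_of_indepFun hclean hflipped he_int hint hint',
    integral_of_ae_eq_zero_or_one he heval]

end Expectation

/-- Under class-conditional label noise `Ỹ = εY + (1-ε)(1-Y)` with `ε`
a `{0,1}`-valued random variable independent of `(X, Y)` and `P(ε = 1) = γ`,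
the noisy pointwise risk decomposes as
`E[ℓ(f(X)(2Ỹ-1))] = γ E[ℓ(f(X)(2Y-1))] + (1-γ) E[ℓ(-f(X)(2Y-1))]`. -/
theorem noisy_pointwise_risk_decomposition
    {Ω : Type*} [MeasurableSpace Ω] (P : Measure Ω) [IsProbabilityMeasure P]
    {𝒳 : Type*} [MeasurableSpace 𝒳]
    (X : Ω → 𝒳) (Y e : Ω → ℝ) (γ : ℝ)
    (hX : Measurable X) (hY : Measurable Y) (he : Measurable e)
    (hYval : ∀ ω, Y ω = 0 ∨ Y ω = 1)
    (heval : ∀ ω, e ω = 0 ∨ e ω = 1)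
    (hγ : γ ∈ Set.Icc (0 : ℝ) 1)
    (hindep : IndepFun (fun ω => (X ω, Y ω)) e P)
    (heγ : P {ω | e ω = 1} = ENNReal.ofReal γ)
    (ℓ : ℝ → ℝ) (f : 𝒳 → ℝ) (hℓ : Measurable ℓ) (hf : Measurable f)
    (hint : Integrable (fun ω => ℓ (f (X ω) * (2 * Y ω - 1))) P)
    (hint' : Integrable (fun ω => ℓ (-(f (X ω) * (2 * Y ω - 1)))) P) :
    ∫ ω, ℓ (f (X ω) * (2 * (e ω * Y ω + (1 - e ω) * (1 - Y ω)) - 1)) ∂P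
      = γ * ∫ ω, ℓ (f (X ω) * (2 * Y ω - 1)) ∂P
        + (1 - γ) * ∫ ω, ℓ (-(f (X ω) * (2 * Y ω - 1))) ∂P := by
  rw [← ENNReal.toReal_ofReal hγ.1, ← heγ]
  exact noisy_pointwise_risk_decomposition_general he.aemeasurable (ae_of_all P heval) hindep
    hℓ hf hint hint'
end

section
/- Let (Ω, P) be a probability space, X a random feature vector, Y a {0,1}-valued random label, and ε a {0,1}-valued random variable independent of (X, Y) with P(ε = 1) = γ. Define Ỹ = εY + (1−ε)(1−Y). Let ℓ : ℝ → ℝ be a label-symmetric loss with constant c. Then for any two measurable scorers f, g satisfying f(X) ≠ 0 and g(X) ≠ 0 almost surely and with ℓ(f(X)(2Y−1)) and ℓ(g(X)(2Y−1)) integrable, the order-preservation identity holds: L̃(f) − L̃(g) = (2γ−1)·(L(f) − L(g)). -/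
open MeasureTheory ProbabilityTheory

/-!
Corrupting the label multiplies the margin by the random sign `2ε - 1`. For a sign `s`, label
symmetry says `ℓ (s * α) = s * ℓ α + c / 2 * (1 - s)`, which is affine in `ℓ α`. Independence of
`ε` then gives `L̃(f) = (2γ - 1) * L(f) + c * (1 - γ)`, whose additive term does not depend on the
scorer and cancels in differences.
-/

/-- A margin loss `ℓ` is label-symmetric with constant `c` if its values at opposite nonzero
margins add up to `c`. The margin `0` is excluded so that losses such as the zero-one loss
qualify. -/
def LabelSymmetricWith (ℓ : ℝ → ℝ) (c : ℝ) : Prop :=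
  ∀ α : ℝ, α ≠ 0 → ℓ α + ℓ (-α) = c

/-- The label `y` kept when `e = 1` and flipped when `e = 0`, with all labels encoded as the real
numbers `0` and `1`. -/
def corruptedLabel (e y : ℝ) : ℝ :=
  e * y + (1 - e) * (1 - y)

/-- The pointwise risk, under the margin loss `ℓ`, of a random score `U` for a random label `Y`
encoded as `0` or `1`. For a scorer `f` of a feature vector `X`, the score is `f ∘ X`. -/
noncomputable def pointwiseRisk {Ω : Type*} [MeasurableSpace Ω] (P : Measure Ω) (ℓ : ℝ → ℝ)
    (U Y : Ω → ℝ) : ℝ :=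
  ∫ ω, ℓ (U ω * (2 * Y ω - 1)) ∂P

lemma two_mul_corruptedLabel_sub_one (e y : ℝ) :
    2 * corruptedLabel e y - 1 = (2 * e - 1) * (2 * y - 1) := by
  unfold corruptedLabel
  ring

lemma LabelSymmetricWith.apply_sign_mul {ℓ : ℝ → ℝ} {c s α : ℝ} (hℓ : LabelSymmetricWith ℓ c)
    (hs : s = 1 ∨ s = -1) (hα : α ≠ 0) :
    ℓ (s * α) = s * ℓ α + c / 2 * (1 - s) := by
  rcases hs with rfl | rfl
  · simp
  · rw [neg_one_mul]
    linear_combination hℓ α hα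

section

variable {Ω : Type*} [MeasurableSpace Ω] {P : Measure Ω}

lemma integral_eq_measureReal_of_ae_zero_or_one {e : Ω → ℝ} (he : AEMeasurable e P)
    (he01 : ∀ᵐ ω ∂P, e ω = 0 ∨ e ω = 1) :
    ∫ ω, e ω ∂P = P.real {ω | e ω = 1} := by
  have he_indicator : e =ᵐ[P] {ω | e ω = 1}.indicator fun _ => 1 := by
    filter_upwards [he01] with ω hω
    rcases hω with hω | hω <;> simp [Set.indicator, hω]
  have hmeas : NullMeasurableSet {ω | e ω = 1} P :=
    he.nullMeasurableSet_preimage (measurableSet_singleton 1)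
  rw [integral_congr_ae he_indicator, integral_indicator₀ hmeas, setIntegral_one_eq_measureReal]

variable [IsProbabilityMeasure P]

lemma LabelSymmetricWith.integral_sign_mul {ℓ : ℝ → ℝ} {c : ℝ} (hℓ : LabelSymmetricWith ℓ c)
    {S Z : Ω → ℝ} (hS : AEMeasurable S P) (hS_sign : ∀ᵐ ω ∂P, S ω = 1 ∨ S ω = -1)
    (hZ : ∀ᵐ ω ∂P, Z ω ≠ 0) (hindep : IndepFun S (fun ω => ℓ (Z ω)) P)
    (hloss_int : Integrable (fun ω => ℓ (Z ω)) P) :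
    ∫ ω, ℓ (S ω * Z ω) ∂P
      = (∫ ω, S ω ∂P) * (∫ ω, ℓ (Z ω) ∂P) + c / 2 * (1 - ∫ ω, S ω ∂P) := by
  have hS_int : Integrable S P := by
    refine Integrable.of_bound hS.aestronglyMeasurable 1 ?_
    filter_upwards [hS_sign] with ω hω
    rcases hω with hω | hω <;> simp [hω]
  calc ∫ ω, ℓ (S ω * Z ω) ∂P
      = ∫ ω, (S ω * ℓ (Z ω) + c / 2 * (1 - S ω)) ∂P := by
        refine integral_congr_ae ?_
        filter_upwards [hS_sign, hZ] with ω hSω hZω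
        exact hℓ.apply_sign_mul hSω hZω
    _ = ∫ ω, S ω * ℓ (Z ω) ∂P + c / 2 * ∫ ω, (1 - S ω) ∂P := by
        have hprod_int : Integrable (fun ω => S ω * ℓ (Z ω)) P :=
          hindep.integrable_mul hS_int hloss_int
        have hconst_int : Integrable (fun ω => c / 2 * (1 - S ω)) P :=
          ((integrable_const 1).sub hS_int).const_mul _
        rw [integral_add hprod_int hconst_int, integral_const_mul]
    _ = (∫ ω, S ω ∂P) * (∫ ω, ℓ (Z ω) ∂P) + c / 2 * (1 - ∫ ω, S ω ∂P) := by
        rw [hindep.integral_fun_mul_eq_mul_integral hS.aestronglyMeasurable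
            hloss_int.aestronglyMeasurable,
          integral_sub (integrable_const 1) hS_int, integral_const, probReal_univ, one_smul]

lemma LabelSymmetricWith.pointwiseRisk_corruptedLabel {ℓ : ℝ → ℝ} {c : ℝ}
    (hℓ : LabelSymmetricWith ℓ c) (hℓ_meas : Measurable ℓ) {U Y e : Ω → ℝ}
    (hU : ∀ᵐ ω ∂P, U ω ≠ 0) (hY : ∀ᵐ ω ∂P, Y ω = 0 ∨ Y ω = 1)
    (he : AEMeasurable e P) (he01 : ∀ᵐ ω ∂P, e ω = 0 ∨ e ω = 1)
    (hindep : IndepFun (fun ω => (U ω, Y ω)) e P)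
    (hloss_int : Integrable (fun ω => ℓ (U ω * (2 * Y ω - 1))) P) :
    pointwiseRisk P ℓ U (fun ω => corruptedLabel (e ω) (Y ω))
      = (2 * P.real {ω | e ω = 1} - 1) * pointwiseRisk P ℓ U Y
        + c * (1 - P.real {ω | e ω = 1}) := by
  have he_int : Integrable e P := by
    refine Integrable.of_bound he.aestronglyMeasurable 1 ?_
    filter_upwards [he01] with ω hω
    rcases hω with hω | hω <;> simp [hω]
  have hsign_mean : ∫ ω, (2 * e ω - 1) ∂P = 2 * P.real {ω | e ω = 1} - 1 := by
    rw [integral_sub (he_int.const_mul 2) (integrable_const 1), integral_const_mul,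
      integral_eq_measureReal_of_ae_zero_or_one he he01, integral_const, probReal_univ, one_smul]
  have hsign : ∀ᵐ ω ∂P, 2 * e ω - 1 = 1 ∨ 2 * e ω - 1 = -1 := by
    filter_upwards [he01] with ω hω
    rcases hω with hω | hω <;> norm_num [hω]
  have hmargin : ∀ᵐ ω ∂P, U ω * (2 * Y ω - 1) ≠ 0 := by
    filter_upwards [hU, hY] with ω hUω hYω
    rcases hYω with hYω | hYω <;> norm_num [hYω, hUω]
  have hindep_sign : IndepFun (fun ω => 2 * e ω - 1) (fun ω => ℓ (U ω * (2 * Y ω - 1))) P :=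
    hindep.symm.comp (φ := fun x : ℝ => 2 * x - 1)
      (ψ := fun p : ℝ × ℝ => ℓ (p.1 * (2 * p.2 - 1))) (by fun_prop) (by fun_prop)
  have hsign_meas : AEMeasurable (fun ω => 2 * e ω - 1) P := by fun_prop
  simp only [pointwiseRisk, two_mul_corruptedLabel_sub_one, mul_left_comm (U _)]
  rw [hℓ.integral_sign_mul hsign_meas hsign hmargin hindep_sign hloss_int, hsign_mean]
  ring

end

/-- For a label-symmetric loss `ℓ` under class-conditional label noise,
the order-preservation identity holds for pointwise risks of any two scorers `f, g`
with nonzero scores a.s.: `L̃(f) - L̃(g) = (2γ-1)(L(f) - L(g))`. -/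
theorem label_symmetric_order_preserving_pointwise
    {Ω : Type*} [MeasurableSpace Ω] (P : Measure Ω) [IsProbabilityMeasure P]
    {𝒳 : Type*} [MeasurableSpace 𝒳]
    (X : Ω → 𝒳) (Y e : Ω → ℝ) (γ : ℝ)
    (hX : Measurable X) (hY : Measurable Y) (he : Measurable e)
    (hYval : ∀ ω, Y ω = 0 ∨ Y ω = 1)
    (heval : ∀ ω, e ω = 0 ∨ e ω = 1)
    (hγ : γ ∈ Set.Icc (0 : ℝ) 1)
    (hindep : IndepFun (fun ω => (X ω, Y ω)) e P)
    (heγ : P {ω | e ω = 1} = ENNReal.ofReal γ)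
    (ℓ : ℝ → ℝ) (c : ℝ) (hsym : ∀ α : ℝ, α ≠ 0 → ℓ α + ℓ (-α) = c)
    (f g : 𝒳 → ℝ) (hℓ : Measurable ℓ) (hf : Measurable f) (hg : Measurable g)
    (hf0 : ∀ᵐ ω ∂P, f (X ω) ≠ 0) (hg0 : ∀ᵐ ω ∂P, g (X ω) ≠ 0)
    (hintf : Integrable (fun ω => ℓ (f (X ω) * (2 * Y ω - 1))) P)
    (hintg : Integrable (fun ω => ℓ (g (X ω) * (2 * Y ω - 1))) P) :
    (∫ ω, ℓ (f (X ω) * (2 * (e ω * Y ω + (1 - e ω) * (1 - Y ω)) - 1)) ∂P)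
      - (∫ ω, ℓ (g (X ω) * (2 * (e ω * Y ω + (1 - e ω) * (1 - Y ω)) - 1)) ∂P)
      = (2 * γ - 1)
        * ((∫ ω, ℓ (f (X ω) * (2 * Y ω - 1)) ∂P)
            - (∫ ω, ℓ (g (X ω) * (2 * Y ω - 1)) ∂P)) := by
  have hγ_real : P.real {ω | e ω = 1} = γ := by
    rw [measureReal_def, heγ, ENNReal.toReal_ofReal hγ.1]
  have noisy_risk {h : 𝒳 → ℝ} (hh : Measurable h) (hh0 : ∀ᵐ ω ∂P, h (X ω) ≠ 0)
      (hloss_int : Integrable (fun ω => ℓ (h (X ω) * (2 * Y ω - 1))) P) :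
      pointwiseRisk P ℓ (fun ω => h (X ω)) (fun ω => corruptedLabel (e ω) (Y ω))
        = (2 * γ - 1) * pointwiseRisk P ℓ (fun ω => h (X ω)) Y + c * (1 - γ) := by
    have hindep_score : IndepFun (fun ω => (h (X ω), Y ω)) e P :=
      hindep.comp (φ := Prod.map h id) (ψ := id) (hh.prodMap measurable_id) measurable_id
    rw [← hγ_real]
    exact LabelSymmetricWith.pointwiseRisk_corruptedLabel hsym hℓ hh0 (.of_forall hYval)
      he.aemeasurable (.of_forall heval) hindep_score hloss_int
  have hf_risk := noisy_risk hf hf0 hintf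
  have hg_risk := noisy_risk hg hg0 hintg
  unfold pointwiseRisk corruptedLabel at hf_risk hg_risk
  linear_combination hf_risk - hg_risk
end

section
/- Let (X₁, Y₁) and (X₂, Y₂) be i.i.d. random pairs with {0,1}-valued labels, let ℓ : ℝ → ℝ be a label-symmetric loss with constant c, let f be a measurable scorer, and fix y ∈ {0,1} with P(Y₁ = y) > 0. Assume that conditioned on the event {Y₁ = y, Y₂ = y}, ties occur with probability zero, i.e., P(f(X₁) = f(X₂) | Y₁ = y, Y₂ = y) = 0, and that ℓ(f(X₁) − f(X₂)) is integrable on this event. Then E[ℓ(f(X₁) − f(X₂)) | Y₁ = y, Y₂ = y] = c/2. -/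
open MeasureTheory ProbabilityTheory

/-!
Two i.i.d. pairs are exchangeable, and remain so on the symmetric event that both labels equal `y`.
Swapping the pairs therefore does not change the integral of `ℓ (f X₁ - f X₂)` over that event,
while off ties the loss and its swapped copy add up to `c`.
-/

section Exchangeable

variable {Ω Ω' E : Type*} {mΩ : MeasurableSpace Ω} {mΩ' : MeasurableSpace Ω'}
  {mE : MeasurableSpace E} {μ : Measure Ω} {ν : Measure Ω'}

lemma identDistrib_restrict_preimage {U : Ω → E} {V : Ω' → E} (h : IdentDistrib U V μ ν)
    {B : Set E} (hB : MeasurableSet B) :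
    IdentDistrib U V (μ.restrict (U ⁻¹' B)) (ν.restrict (V ⁻¹' B)) where
  aemeasurable_fst := h.aemeasurable_fst.restrict
  aemeasurable_snd := h.aemeasurable_snd.restrict
  map_eq := by
    rw [← Measure.restrict_map_of_aemeasurable h.aemeasurable_fst hB,
      ← Measure.restrict_map_of_aemeasurable h.aemeasurable_snd hB, h.map_eq]

variable {Z W : Ω → E}

lemma identDistrib_swap_restrict [IsFiniteMeasure μ] (hindep : Z ⟂ᵢ[μ] W)
    (hid : IdentDistrib Z W μ μ) {A : Set E} (hA : MeasurableSet A) :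
    IdentDistrib (fun ω ↦ (Z ω, W ω)) (fun ω ↦ (W ω, Z ω))
      (μ.restrict (Z ⁻¹' A ∩ W ⁻¹' A)) (μ.restrict (Z ⁻¹' A ∩ W ⁻¹' A)) := by
  have hswap := hid.prodMk hid.symm hindep hindep.symm
  have hrestrict := identDistrib_restrict_preimage hswap (hA.prod hA)
  rwa [Set.mk_preimage_prod, Set.mk_preimage_prod, Set.inter_comm (W ⁻¹' A)] at hrestrict

lemma integral_eq_smul_of_add_swap_ae_eq {F : Type*} [NormedAddCommGroup F] [NormedSpace ℝ F]
    [CompleteSpace F] [MeasurableSpace F] [BorelSpace F]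
    (hswap : IdentDistrib (fun ω ↦ (Z ω, W ω)) (fun ω ↦ (W ω, Z ω)) μ μ)
    {k : E × E → F} {c : F} (hk : Measurable k) (hint : Integrable (fun ω ↦ k (Z ω, W ω)) μ)
    (hadd : ∀ᵐ ω ∂μ, k (Z ω, W ω) + k (W ω, Z ω) = c) :
    ∫ ω, k (Z ω, W ω) ∂μ = (μ.real Set.univ / 2) • c := by
  have hk_swap : IdentDistrib (fun ω ↦ k (Z ω, W ω)) (fun ω ↦ k (W ω, Z ω)) μ μ := hswap.comp hk
  have htwice : (2 : ℝ) • ∫ ω, k (Z ω, W ω) ∂μ = μ.real Set.univ • c :=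
    calc (2 : ℝ) • ∫ ω, k (Z ω, W ω) ∂μ
      _ = ∫ ω, k (Z ω, W ω) ∂μ + ∫ ω, k (W ω, Z ω) ∂μ := by rw [two_smul, ← hk_swap.integral_eq]
      _ = ∫ ω, k (Z ω, W ω) + k (W ω, Z ω) ∂μ :=
        (integral_add hint (hk_swap.integrable_snd hint)).symm
      _ = ∫ _, c ∂μ := integral_congr_ae hadd
      _ = μ.real Set.univ • c := integral_const c
  rw [div_eq_inv_mul, mul_smul, ← htwice, inv_smul_smul₀ two_ne_zero]

lemma measure_inter_preimage_ne_zero (hindep : Z ⟂ᵢ[μ] W) (hid : IdentDistrib Z W μ μ)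
    {A : Set E} (hA : MeasurableSet A) (hpos : μ (Z ⁻¹' A) ≠ 0) :
    μ (Z ⁻¹' A ∩ W ⁻¹' A) ≠ 0 := by
  rw [hindep.measure_inter_preimage_eq_mul A A hA hA, ← hid.measure_mem_eq hA]
  exact mul_ne_zero hpos hpos

end Exchangeable

theorem pairwise_same_label_conditional_risk_general
    {Ω 𝒳 𝒴 : Type*} [MeasurableSpace Ω] [MeasurableSpace 𝒳] [MeasurableSpace 𝒴]
    (P : Measure Ω) [IsFiniteMeasure P] {X₁ X₂ : Ω → 𝒳} {Y₁ Y₂ : Ω → 𝒴}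
    (hindep : IndepFun (fun ω ↦ (X₁ ω, Y₁ ω)) (fun ω ↦ (X₂ ω, Y₂ ω)) P)
    (hid : IdentDistrib (fun ω ↦ (X₁ ω, Y₁ ω)) (fun ω ↦ (X₂ ω, Y₂ ω)) P P)
    {ℓ : ℝ → ℝ} {c : ℝ} (hsym : ∀ α : ℝ, α ≠ 0 → ℓ α + ℓ (-α) = c)
    {f : 𝒳 → ℝ} (hℓ : Measurable ℓ) (hf : Measurable f)
    {B : Set 𝒴} (hB : MeasurableSet B) (hpos : 0 < P {ω | Y₁ ω ∈ B})
    (hties : P ({ω | f (X₁ ω) = f (X₂ ω)} ∩ {ω | Y₁ ω ∈ B ∧ Y₂ ω ∈ B}) = 0)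
    (hint : IntegrableOn (fun ω ↦ ℓ (f (X₁ ω) - f (X₂ ω))) {ω | Y₁ ω ∈ B ∧ Y₂ ω ∈ B} P) :
    (∫ ω in {ω | Y₁ ω ∈ B ∧ Y₂ ω ∈ B}, ℓ (f (X₁ ω) - f (X₂ ω)) ∂P)
      / (P {ω | Y₁ ω ∈ B ∧ Y₂ ω ∈ B}).toReal = c / 2 := by
  set S := {ω | Y₁ ω ∈ B ∧ Y₂ ω ∈ B}
  let k : (𝒳 × 𝒴) × (𝒳 × 𝒴) → ℝ := fun p ↦ ℓ (f p.1.1 - f p.2.1)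
  have hA : MeasurableSet (Prod.snd ⁻¹' B : Set (𝒳 × 𝒴)) := measurable_snd hB
  have hS_meas : NullMeasurableSet S P :=
    (hid.aemeasurable_fst.nullMeasurableSet_preimage hA).inter
      (hid.aemeasurable_snd.nullMeasurableSet_preimage hA)
  have hno_ties : ∀ᵐ ω ∂P.restrict S, f (X₁ ω) ≠ f (X₂ ω) := by
    simpa only [ae_iff, Measure.restrict_apply₀' hS_meas, not_not] using hties
  have hadd : ∀ᵐ ω ∂P.restrict S,
      ℓ (f (X₁ ω) - f (X₂ ω)) + ℓ (f (X₂ ω) - f (X₁ ω)) = c := by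
    filter_upwards [hno_ties] with ω hω
    simpa only [neg_sub] using hsym _ (sub_ne_zero.2 hω)
  have hintegral : ∫ ω in S, ℓ (f (X₁ ω) - f (X₂ ω)) ∂P
      = ((P.restrict S).real Set.univ / 2) • c :=
    integral_eq_smul_of_add_swap_ae_eq (identDistrib_swap_restrict hindep hid hA) (k := k)
      (by fun_prop) hint hadd
  have hS_ne_zero : P.real S ≠ 0 :=
    (measureReal_ne_zero_iff).2 (measure_inter_preimage_ne_zero hindep hid hA hpos.ne')
  rw [hintegral, measureReal_restrict_apply_univ, smul_eq_mul, ← measureReal_def]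
  field_simp

/-- For i.i.d. pairs `(X₁,Y₁)`, `(X₂,Y₂)`, a label-symmetric loss `ℓ`
(with constant `c`) and a scorer `f` with no ties on the event `{Y₁ = y, Y₂ = y}`
(for `y ∈ {0,1}` with `P(Y₁ = y) > 0`), the conditional pairwise risk on same-label
pairs is `E[ℓ(f(X₁) - f(X₂)) | Y₁ = y, Y₂ = y] = c/2`. -/
theorem pairwise_same_label_conditional_risk
    {Ω : Type*} [MeasurableSpace Ω] (P : Measure Ω) [IsProbabilityMeasure P]
    {𝒳 : Type*} [MeasurableSpace 𝒳]
    (X₁ X₂ : Ω → 𝒳) (Y₁ Y₂ : Ω → ℝ)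
    (hX₁ : Measurable X₁) (hX₂ : Measurable X₂)
    (hY₁ : Measurable Y₁) (hY₂ : Measurable Y₂)
    (hY₁val : ∀ ω, Y₁ ω = 0 ∨ Y₁ ω = 1)
    (hY₂val : ∀ ω, Y₂ ω = 0 ∨ Y₂ ω = 1)
    (hindep : IndepFun (fun ω => (X₁ ω, Y₁ ω)) (fun ω => (X₂ ω, Y₂ ω)) P)
    (hid : IdentDistrib (fun ω => (X₁ ω, Y₁ ω)) (fun ω => (X₂ ω, Y₂ ω)) P P)
    (ℓ : ℝ → ℝ) (c : ℝ) (hsym : ∀ α : ℝ, α ≠ 0 → ℓ α + ℓ (-α) = c)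
    (f : 𝒳 → ℝ) (hℓ : Measurable ℓ) (hf : Measurable f)
    (y : ℝ) (hy : y = 0 ∨ y = 1)
    (hpos : 0 < P {ω | Y₁ ω = y})
    (hties : P ({ω | f (X₁ ω) = f (X₂ ω)} ∩ {ω | Y₁ ω = y ∧ Y₂ ω = y}) = 0)
    (hint : IntegrableOn (fun ω => ℓ (f (X₁ ω) - f (X₂ ω)))
      {ω | Y₁ ω = y ∧ Y₂ ω = y} P) :
    (∫ ω in {ω | Y₁ ω = y ∧ Y₂ ω = y}, ℓ (f (X₁ ω) - f (X₂ ω)) ∂P)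
      / (P {ω | Y₁ ω = y ∧ Y₂ ω = y}).toReal = c / 2 :=
  pairwise_same_label_conditional_risk_general P hindep hid hsym hℓ hf (measurableSet_singleton y)
    hpos hties hint
end

section
/- Let F be a nonempty set of scoring functions, γ ∈ (1/2, 1], b ∈ ℝ, and let L, L̃ : F → ℝ satisfy L̃(f) = (2γ−1)·L(f) + b for all f ∈ F, with L bounded below on F. Let (Ω, P) be a probability space, and for each n let L̃_n : Ω × F → ℝ be the noisy empirical risk and f_n : Ω → F a minimizer of the noisy empirical risk: L̃_n(ω, f_n(ω)) = inf_{f∈F} L̃_n(ω, f) for all ω. If the uniform deviations converge in probability, i.e., sup_{f∈F} |L̃_n(·, f) − L̃(f)| → 0 in probability as n → ∞ (assuming these suprema are measurable), then the clean excess risk of the selected function converges in probability: L(f_n) − inf_{f∈F} L(f) → 0 in probability. That is, empirical risk minimization on noisy data is consistent for the clean risk, with the convergence rate scaled by the constant factor 2γ−1. -/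
open MeasureTheory Filter

/-!
The argument is pathwise: an empirical minimizer is compared with any competitor through the
empirical risk, which costs the uniform deviation twice, and the affine relation converts the
resulting bound on the noisy risk into one on the clean risk by dividing by the slope. The
probabilistic conclusion is then an inclusion of events.
-/

section OrderedGroup

variable {F G : Type*} [AddCommGroup G] [LinearOrder G] [IsOrderedAddMonoid G]

theorem le_add_add_of_le_of_abs_sub_le {empRisk risk : F → G} {δ : G} {g f : F}
    (hle : empRisk g ≤ empRisk f) (hg : |empRisk g - risk g| ≤ δ)
    (hf : |empRisk f - risk f| ≤ δ) :
    risk g ≤ risk f + δ + δ :=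
  calc
    risk g ≤ empRisk g + δ := sub_le_iff_le_add'.mp (abs_sub_le_iff.mp hg).2
    _ ≤ empRisk f + δ := by gcongr
    _ ≤ risk f + δ + δ := by
      gcongr
      exact sub_le_iff_le_add'.mp (abs_sub_le_iff.mp hf).1

end OrderedGroup

section AffineRisk

variable {F : Type*} {L Lt : F → ℝ} {c b : ℝ}

theorem sub_iInf_le_of_minimizer_of_abs_sub_le (hc : 0 < c) (haff : ∀ f, Lt f = c * L f + b)
    {empRisk : F → ℝ} {δ : ℝ} {g : F}
    (hmin : ∀ f, empRisk g ≤ empRisk f) (hdev : ∀ f, |empRisk f - Lt f| ≤ δ) :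
    L g - ⨅ f, L f ≤ 2 * δ / c := by
  have : Nonempty F := ⟨g⟩
  refine sub_le_comm.mp (le_ciInf fun f => sub_le_comm.mp ?_)
  have hnoisy : Lt g ≤ Lt f + δ + δ :=
    le_add_add_of_le_of_abs_sub_le (hmin f) (hdev g) (hdev f)
  have hscale : Lt g - Lt f = (L g - L f) * c := by rw [haff, haff]; ring
  rw [le_div_iff₀ hc, ← hscale]
  linarith

variable {Ω : Type*} [MeasurableSpace Ω]

theorem measure_lt_sub_iInf_le (hc : 0 < c) (haff : ∀ f, Lt f = c * L f + b) (μ : Measure Ω)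
    {empRisk : Ω → F → ℝ} {g : Ω → F} (hmin : ∀ ω f, empRisk ω (g ω) ≤ empRisk ω f) (ε : ℝ) :
    μ {ω | ε < L (g ω) - ⨅ f, L f} ≤ μ {ω | ∃ f, c * ε / 2 < |empRisk ω f - Lt f|} := by
  refine measure_mono fun ω (hω : ε < L (g ω) - ⨅ f, L f) => ?_
  by_contra hsmall
  have hdev : ∀ f, |empRisk ω f - Lt f| ≤ c * ε / 2 :=
    fun f => not_lt.mp fun hf => hsmall ⟨f, hf⟩
  have hexcess : L (g ω) - ⨅ f, L f ≤ ε :=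
    calc
      L (g ω) - ⨅ f, L f ≤ 2 * (c * ε / 2) / c :=
        sub_iInf_le_of_minimizer_of_abs_sub_le hc haff (hmin ω) hdev
      _ = ε := by field_simp
  exact hω.not_ge hexcess

theorem noisy_erm_consistent_general (hc : 0 < c) (haff : ∀ f, Lt f = c * L f + b)
    (μ : Measure Ω) {ι : Type*} {l : Filter ι} {empRisk : ι → Ω → F → ℝ} {g : ι → Ω → F}
    (hmin : ∀ i ω f, empRisk i ω (g i ω) ≤ empRisk i ω f)
    (hconv : ∀ ε > (0 : ℝ),
      Tendsto (fun i => μ {ω | ∃ f, ε < |empRisk i ω f - Lt f|}) l (nhds 0)) :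
    ∀ ε > (0 : ℝ), Tendsto (fun i => μ {ω | ε < L (g i ω) - ⨅ f, L f}) l (nhds 0) := by
  intro ε hε
  have hδ : 0 < c * ε / 2 := by positivity
  exact tendsto_of_tendsto_of_tendsto_of_le_of_le tendsto_const_nhds (hconv _ hδ)
    (fun _ => zero_le) fun i => measure_lt_sub_iInf_le hc haff μ (hmin i) ε

end AffineRisk

/-- If the noisy risk `L̃` is an affine transform of the clean risk `L`
with slope `2γ-1 > 0` (order preservation), `L` is bounded below, `f_n(ω)` minimizes
the noisy empirical risk `L̃_n(ω, ·)` for every `ω`, and the uniform deviations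
`sup_{f∈F} |L̃_n(·, f) - L̃(f)|` converge to `0` in probability (these suprema being
measurable, expressed via the events `{ω | ∃ f, ε < |L̃_n(ω, f) - L̃(f)|}`), then the
clean excess risk `L(f_n) - inf L` converges to `0` in probability: noisy ERM is
consistent for the clean risk. -/
theorem noisy_erm_consistent
    {F : Type*} [Nonempty F] (L Lt : F → ℝ) (γ b : ℝ)
    (hγ : γ ∈ Set.Ioc (1 / 2 : ℝ) 1)
    (haff : ∀ f, Lt f = (2 * γ - 1) * L f + b)
    (hbdd : BddBelow (Set.range L))
    {Ω : Type*} [MeasurableSpace Ω] (P : Measure Ω) [IsProbabilityMeasure P]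
    (Ln : ℕ → Ω → F → ℝ) (fn : ℕ → Ω → F)
    (hmin : ∀ n ω f, Ln n ω (fn n ω) ≤ Ln n ω f)
    (hmeas : ∀ n (t : ℝ), MeasurableSet {ω | ∃ f, t < |Ln n ω f - Lt f|})
    (hconv : ∀ ε > (0 : ℝ),
      Tendsto (fun n => P {ω | ∃ f, ε < |Ln n ω f - Lt f|}) atTop (nhds 0)) :
    ∀ ε > (0 : ℝ),
      Tendsto (fun n => P {ω | ε < L (fn n ω) - ⨅ f, L f}) atTop (nhds 0) :=
  noisy_erm_consistent_general (by linarith [hγ.1]) haff P hmin hconv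
end
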